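/- arXiv:1608.02406 — 2 statements merged into one kernel-verified Lean document; each statement's English description precedes it below -/
import Mathlib

section
/- In the manipulation construction, for every α : X → Bool the ballot J*_α is rational and Dist(J*_α, J⃗) = 7n + 3m + 2 + 3u. -/
/-!
Constraint-based judgment aggregation: the manipulation construction.
Issues are modelled as an inductive type, ballots as functions `Issue n m → Bool`,
the integrity constraint as a predicate on ballots, and the formula ψ as a Boolean
function of the assignments to X and Y.
-/

namespace Manip

/-- The issues of the manipulation construction. -/
inductive Issue (n m : ℕ) : Type
  | x : Fin n → Issue n m
  | x' : Fin n → Issue n m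
  | z : Fin (n / 3) → Issue n m
  | y : Fin m → Issue n m
  | y' : Fin m → Issue n m
  | t : Fin m → Issue n m
  | w1 : Fin (n + 1) → Issue n m
  | w2 : Fin n → Issue n m
  | w3 : Fin n → Issue n m
  | u : Fin 3 → Fin (10 * n + 10 * m + 10) → Issue n m
  deriving DecidableEq, Fintype

variable {n m : ℕ}

/-- Hamming distance between two ballots: the number of issues on which they differ. -/
def hamming {I : Type*} [Fintype I] (r r' : I → Bool) : ℕ :=
  (Finset.univ.filter (fun i => r i ≠ r' i)).card

def bigA (r : Issue n m → Bool) : Prop := ∀ i, r (.x i) ≠ r (.x' i)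
def bigZ (r : Issue n m → Bool) : Prop := ∀ i, r (.z i) = true
def bigB (r : Issue n m → Bool) : Prop := ∀ j, r (.y j) ≠ r (.y' j)
def bigT (r : Issue n m → Bool) : Prop := ∀ j, r (.t j) = true
def bigW1 (r : Issue n m → Bool) : Prop := ∀ ℓ, r (.w1 ℓ) = true
def bigW2 (r : Issue n m → Bool) : Prop := ∀ ℓ, r (.w2 ℓ) = true
def bigW3 (r : Issue n m → Bool) : Prop := ∀ ℓ, r (.w3 ℓ) = true

/-- The part Γ₀ of the integrity constraint. -/
def gamma0 (psi : (Fin n → Bool) → (Fin m → Bool) → Bool) (r : Issue n m → Bool) : Prop :=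
  (bigA r ∨ bigZ r) ∧ (bigA r → ∀ i, r (.z i) = false) ∧
  Xor' (bigB r) (bigT r) ∧ (bigB r → ∀ j, r (.t j) = false) ∧
  (bigZ r → ∀ i, r (.x i) = false ∧ r (.x' i) = false) ∧
  (bigT r → ∀ j, r (.y j) = false ∧ r (.y' j) = false) ∧
  (bigZ r → bigT r) ∧
  ((bigZ r ∧ bigT r) → (bigW2 r ∨ bigW3 r)) ∧
  ((¬ bigZ r ∧ bigT r) → bigW1 r) ∧
  ((¬ bigZ r ∧ ¬ bigT r) →
    (psi (fun i => r (.x i)) (fun j => r (.y j)) = false ∧ (bigW2 r ∨ bigW3 r)))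

/-- A ballot is rational if it satisfies the integrity constraint
`Γ = Γ₀ ∨ ⋁_{i∈[3]} ⋀_{ℓ∈[u]} u_{i,ℓ}`. -/
def rational (psi : (Fin n → Bool) → (Fin m → Bool) → Bool) (r : Issue n m → Bool) : Prop :=
  gamma0 psi r ∨ ∃ i : Fin 3, ∀ ℓ, r (.u i ℓ) = true

/-- The first individual ballot J₁: true exactly on the w₁- and u₁-issues. -/
def Jone : Issue n m → Bool := fun i => match i with
  | .w1 _ => true
  | .u k _ => k == 0
  | _ => false

/-- The second individual ballot J₂: true exactly on the w₂- and u₂-issues. -/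
def Jtwo : Issue n m → Bool := fun i => match i with
  | .w2 _ => true
  | .u k _ => k == 1
  | _ => false

/-- The third individual ballot J₃: true exactly on the x-, x'-, w₃- and u₃-issues. -/
def Jthree : Issue n m → Bool := fun i => match i with
  | .x _ => true
  | .x' _ => true
  | .w3 _ => true
  | .u k _ => k == 2
  | _ => false

/-- Cumulative Hamming distance of a ballot to a profile of three ballots. -/
def dist3 (r p1 p2 p3 : Issue n m → Bool) : ℕ :=
  hamming r p1 + hamming r p2 + hamming r p3

/-- Cumulative Hamming distance to the profile J⃗ = (J₁, J₂, J₃). -/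
def DistP (r : Issue n m → Bool) : ℕ := dist3 r Jone Jtwo Jthree

/-- Membership in the set of Kemeny outcomes of the profile (p1, p2, p3):
a rational ballot minimizing the cumulative Hamming distance among rational ballots. -/
def kemenyMem (psi : (Fin n → Bool) → (Fin m → Bool) → Bool)
    (p1 p2 p3 r : Issue n m → Bool) : Prop :=
  rational psi r ∧ ∀ r', rational psi r' → dist3 r p1 p2 p3 ≤ dist3 r' p1 p2 p3


/-- The ballot J*_α: x_i ↦ α(x_i), x'_i ↦ ¬α(x_i), all t- and w₁-issues true,
every other issue false. -/
def Jalpha (α : Fin n → Bool) : Issue n m → Bool := fun i => match i with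
  | .x i' => α i'
  | .x' i' => !(α i')
  | .t _ => true
  | .w1 _ => true
  | _ => false

end Manip

/-!
`J*_α` satisfies `A` and `T` and rejects every `z`, `y` and `y'`. Since `3 ≤ n` and `0 < m`, both
`Z` and `B` fail, so the only remaining clause of `Γ₀` with content is `(¬Z ∧ T) → ⋀ w₁`, and `J*_α`
accepts every `w₁`.

The Hamming distance splits over the kinds of issues. Each `J_k` gives `x_i` and `x'_i` a common
value while `J*_α` gives them opposite ones, so the `x`- and `x'`-issues together contribute `n` to
every distance, whatever `α` is. On every other kind of issue the ballots are constant (for the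
`u`-issues, constant for each first index).
-/

namespace Manip

section Hamming

variable {I : Type*} [Fintype I]

theorem hamming_eq_sum (r s : I → Bool) : hamming r s = ∑ i, if r i ≠ s i then 1 else 0 :=
  Finset.card_filter _ _

theorem hamming_const (a b : Bool) :
    hamming (fun _ : I => a) (fun _ => b) = if a = b then 0 else Fintype.card I := by
  split_ifs with hab <;> simp [hamming, hab]

theorem hamming_add_hamming_not (r s : I → Bool) :
    hamming r s + hamming (fun i => !r i) s = Fintype.card I := by
  have not_ne_iff (i : I) : (!r i) ≠ s i ↔ ¬ r i ≠ s i := by cases r i <;> cases s i <;> decide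
  simp only [hamming, not_ne_iff]
  exact Finset.card_filter_add_card_filter_not _

end Hamming

variable {n m : ℕ}

theorem sum_issue {M : Type*} [AddCommMonoid M] (f : Issue n m → M) :
    ∑ a, f a = ∑ i, f (.x i) + ∑ i, f (.x' i) + ∑ i, f (.z i) + ∑ j, f (.y j) + ∑ j, f (.y' j) +
      ∑ j, f (.t j) + ∑ l, f (.w1 l) + ∑ l, f (.w2 l) + ∑ l, f (.w3 l) +
      ∑ k, ∑ l, f (.u k l) := by
  -- The equivalence with a sum of index types generated by `deriving Fintype`.
  rw [← (Issue.proxyTypeEquiv n m).sum_comp]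
  simp only [Fintype.sum_sum_type, Fintype.sum_sigma, add_assoc]
  rfl

theorem hamming_issue (r s : Issue n m → Bool) :
    hamming r s =
      hamming (fun i => r (.x i)) (fun i => s (.x i)) +
      hamming (fun i => r (.x' i)) (fun i => s (.x' i)) +
      hamming (fun i => r (.z i)) (fun i => s (.z i)) +
      hamming (fun j => r (.y j)) (fun j => s (.y j)) +
      hamming (fun j => r (.y' j)) (fun j => s (.y' j)) +
      hamming (fun j => r (.t j)) (fun j => s (.t j)) +
      hamming (fun l => r (.w1 l)) (fun l => s (.w1 l)) +
      hamming (fun l => r (.w2 l)) (fun l => s (.w2 l)) +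
      hamming (fun l => r (.w3 l)) (fun l => s (.w3 l)) +
      ∑ k, hamming (fun l => r (.u k l)) (fun l => s (.u k l)) := by
  simp only [hamming_eq_sum, sum_issue]

theorem hamming_Jalpha_Jone (α : Fin n → Bool) :
    hamming (Jalpha α : Issue n m → Bool) Jone = n + m + (10 * n + 10 * m + 10) := by
  simp [hamming_issue, Jalpha, Jone, hamming_add_hamming_not, hamming_const]

theorem hamming_Jalpha_Jtwo (α : Fin n → Bool) :
    hamming (Jalpha α : Issue n m → Bool) Jtwo =
      n + m + (n + 1) + n + (10 * n + 10 * m + 10) := by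
  simp [hamming_issue, Jalpha, Jtwo, hamming_add_hamming_not, hamming_const]

theorem hamming_Jalpha_Jthree (α : Fin n → Bool) :
    hamming (Jalpha α : Issue n m → Bool) Jthree =
      n + m + (n + 1) + n + (10 * n + 10 * m + 10) := by
  simp [hamming_issue, Jalpha, Jthree, hamming_add_hamming_not, hamming_const]

theorem distP_Jalpha (α : Fin n → Bool) :
    DistP (Jalpha α : Issue n m → Bool) =
      7 * n + 3 * m + 2 + 3 * (10 * n + 10 * m + 10) := by
  rw [DistP, dist3, hamming_Jalpha_Jone, hamming_Jalpha_Jtwo, hamming_Jalpha_Jthree]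
  ring

theorem gamma0_of_bigA_of_bigT_of_bigW1 (hn : 3 ≤ n) (hm : 0 < m)
    (psi : (Fin n → Bool) → (Fin m → Bool) → Bool) {r : Issue n m → Bool}
    (hA : bigA r) (hT : bigT r) (hW1 : bigW1 r) (hz : ∀ i, r (.z i) = false)
    (hy : ∀ j, r (.y j) = false ∧ r (.y' j) = false) : gamma0 psi r := by
  have not_bigZ : ¬ bigZ r := fun hZ =>
    Bool.false_ne_true ((hz _).symm.trans (hZ ⟨0, Nat.div_pos hn three_pos⟩))
  have not_bigB : ¬ bigB r := fun hB => hB ⟨0, hm⟩ ((hy _).1.trans (hy _).2.symm)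
  exact ⟨.inl hA, fun _ => hz, .inr ⟨hT, not_bigB⟩, fun hB => absurd hB not_bigB,
    fun hZ => absurd hZ not_bigZ, fun _ => hy, fun _ => hT, fun hZT => absurd hZT.1 not_bigZ,
    fun _ => hW1, fun hZT => absurd hT hZT.2⟩

theorem gamma0_Jalpha (hn : 3 ≤ n) (hm : 0 < m)
    (psi : (Fin n → Bool) → (Fin m → Bool) → Bool) (α : Fin n → Bool) :
    gamma0 psi (Jalpha α : Issue n m → Bool) :=
  gamma0_of_bigA_of_bigT_of_bigW1 hn hm psi (fun i => (Bool.not_ne_self (α i)).symm)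
    (fun _ => rfl) (fun _ => rfl) (fun _ => rfl) fun _ => ⟨rfl, rfl⟩

end Manip

open Manip in
/-- for every α : X → Bool, the ballot J*_α is rational and
Dist(J*_α, J⃗) = 7n + 3m + 2 + 3u. -/
theorem manip_Jalpha_rational_dist (n m : ℕ) (hn : 0 < n) (hdvd : 3 ∣ n) (hm : 0 < m)
    (psi : (Fin n → Bool) → (Fin m → Bool) → Bool) (α : Fin n → Bool) :
    rational psi (Jalpha α : Issue n m → Bool) ∧
    DistP (Jalpha α : Issue n m → Bool) = 7 * n + 3 * m + 2 + 3 * (10 * n + 10 * m + 10) :=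
  ⟨.inl (gamma0_Jalpha (Nat.le_of_dvd hn hdvd) hm psi α), distP_Jalpha α⟩
end

section
/- In the bribery construction, for all α : X → Bool and β : Y → Bool, if ψ[α∪β] is false, then the ballot J*_{α,β} is rational and Dist(J*_{α,β}, (J*_α, J₂, J₃)) = 2n + 6m + 7 + 2u < 2n + 6m + 8 + 2u = Dist(J*_α, (J*_α, J₂, J₃)); consequently J*_α ∉ Kemeny((J*_α, J₂, J₃)). -/
/-!
Constraint-based judgment aggregation: the bribery construction.
Issues are modelled as an inductive type, ballots as functions `Issue n m → Bool`,
the integrity constraint as a predicate on ballots, and the formula ψ as a Boolean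
function of the assignments to X and Y.
-/

namespace Brib

/-- The issues of the bribery construction. -/
inductive Issue (n m : ℕ) : Type
  | x : Fin n → Issue n m
  | x' : Fin n → Issue n m
  | z : Fin n → Issue n m
  | y : Fin m → Issue n m
  | y' : Fin m → Issue n m
  | t : Fin m → Issue n m
  | u : Fin 3 → Fin (10 * n + 10 * m + 10) → Issue n m
  | a : Issue n m
  | b : Fin (2 * m + 4) → Issue n m
  deriving DecidableEq, Fintype

variable {n m : ℕ}

/-- Hamming distance between two ballots: the number of issues on which they differ. -/
def hamming {I : Type*} [Fintype I] (r r' : I → Bool) : ℕ :=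
  (Finset.univ.filter (fun i => r i ≠ r' i)).card

/-- Weighted Hamming distance: the sum of the weights of the issues on which the
two ballots differ. -/
def whamming {I : Type*} [Fintype I] (w : I → ℕ) (r r' : I → Bool) : ℕ :=
  ∑ i ∈ Finset.univ.filter (fun i => r i ≠ r' i), w i

def bigA (r : Issue n m → Bool) : Prop := ∀ i, r (.x i) ≠ r (.x' i)
def bigZ (r : Issue n m → Bool) : Prop := ∀ i, r (.z i) = true
def bigB (r : Issue n m → Bool) : Prop := ∀ j, r (.y j) ≠ r (.y' j)
def bigT (r : Issue n m → Bool) : Prop := ∀ j, r (.t j) = true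
def bigC (r : Issue n m → Bool) : Prop := ∀ j, r (.b j) = true

/-- The part Γ₀ of the integrity constraint. -/
def gamma0 (psi : (Fin n → Bool) → (Fin m → Bool) → Bool) (r : Issue n m → Bool) : Prop :=
  (r .a = true ∨ bigC r) ∧ (r .a = true → ∀ j, r (.b j) = false) ∧
  (bigC r → r .a = false) ∧
  (bigA r ∨ bigZ r) ∧ (bigA r → ∀ i, r (.z i) = false) ∧
  Xor' (bigB r) (bigT r) ∧ (bigB r → ∀ j, r (.t j) = false) ∧
  (bigZ r → ∀ i, r (.x i) = false ∧ r (.x' i) = false) ∧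
  (bigT r → ∀ j, r (.y j) = false ∧ r (.y' j) = false) ∧
  (bigZ r → (r .a = true ∧ bigT r)) ∧
  ((bigA r ∧ bigB r) →
    (psi (fun i => r (.x i)) (fun j => r (.y j)) = false ∧ r .a = true)) ∧
  ((bigA r ∧ bigT r) → bigC r)

/-- A ballot is rational if it satisfies the integrity constraint
`Γ = Γ₀ ∨ ⋁_{i∈[3]} ⋀_{ℓ∈[u]} u_{i,ℓ}`. -/
def rational (psi : (Fin n → Bool) → (Fin m → Bool) → Bool) (r : Issue n m → Bool) : Prop :=
  gamma0 psi r ∨ ∃ i : Fin 3, ∀ ℓ, r (.u i ℓ) = true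

/-- The profile J⃗ = (J₁, J₂, J₃): the ballot J_{k+1} sets exactly the issues
u_{k+1,ℓ} to true. -/
def Jp (k : Fin 3) : Issue n m → Bool := fun i => match i with
  | .u k' _ => k' == k
  | _ => false

/-- The briber's desired ballot J₀: true exactly on the b- and u₁-issues. -/
def Jzero : Issue n m → Bool := fun i => match i with
  | .b _ => true
  | .u k _ => k == 0
  | _ => false

/-- The briber's weight function: weight 1 on each b-issue, weight 0 elsewhere. -/
def wt : Issue n m → ℕ := fun i => match i with
  | .b _ => 1
  | _ => 0

/-- Cumulative Hamming distance of a ballot to a profile of three ballots. -/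
def dist3 (r p1 p2 p3 : Issue n m → Bool) : ℕ :=
  hamming r p1 + hamming r p2 + hamming r p3

/-- Membership in the set of Kemeny outcomes of the profile (p1, p2, p3):
a rational ballot minimizing the cumulative Hamming distance among rational ballots. -/
def kemenyMem (psi : (Fin n → Bool) → (Fin m → Bool) → Bool)
    (p1 p2 p3 r : Issue n m → Bool) : Prop :=
  rational psi r ∧ ∀ r', rational psi r' → dist3 r p1 p2 p3 ≤ dist3 r' p1 p2 p3

/-- The ballot J*_α: x_i ↦ α(x_i), x'_i ↦ ¬α(x_i), all t- and b-issues true,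
every other issue false. -/
def Jalpha (α : Fin n → Bool) : Issue n m → Bool := fun i => match i with
  | .x i' => α i'
  | .x' i' => !(α i')
  | .t _ => true
  | .b _ => true
  | _ => false

/-- The ballot J*_{α,β}: x_i ↦ α(x_i), x'_i ↦ ¬α(x_i), y_j ↦ β(y_j), y'_j ↦ ¬β(y_j),
a true, every other issue false. -/
def Jab (α : Fin n → Bool) (β : Fin m → Bool) : Issue n m → Bool := fun i => match i with
  | .x i' => α i'
  | .x' i' => !(α i')
  | .y j => β j
  | .y' j => !(β j)
  | .a => true
  | _ => false

end Brib

/-!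
A Hamming distance splits into the Hamming distances on the nine families of issues, and on each
family the named ballots either agree everywhere, disagree everywhere, or are complementary on a
pair of families, which contributes the size of one family whatever the assignment. Write `|r|` for
the number of true issues of `r`.

A ballot `r` without true `u`-issues has distance `|r| + u` to each of `J₂` and `J₃`. Passing
from `J*_α` to `J*_{α,β}` trades the `m` issues `t_j` and the `2m + 4` issues `b_j` for `a` and
one of `y_j`, `y'_j` for each `j`: this costs `4m + 5` against the ballot `J*_α` itself, but saves
`2m + 3` against each of `J₂` and `J₃`, a net gain of one.

If `ψ[α∪β]` is false, `J*_{α,β}` satisfies `Γ₀`, so `J*_α` is beaten by a rational ballot.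
-/

namespace Brib

section HammingDist

variable {ι : Type*} [Fintype ι]

lemma hammingDist_const {β : Type*} [DecidableEq β] (c d : β) :
    hammingDist (fun _ : ι => c) (fun _ => d) = if c = d then 0 else Fintype.card ι := by
  split_ifs with h <;> simp [hammingDist, h]

lemma hammingDist_add_hammingDist_not (f g : ι → Bool) :
    hammingDist f g + hammingDist (fun i => !f i) g = Fintype.card ι := by
  have hnot : hammingDist (fun i => !f i) g = (Finset.univ.filter fun i => ¬ f i ≠ g i).card := by
    simp [hammingDist]
  rw [hnot, hammingDist, Finset.card_filter_add_card_filter_not, Finset.card_univ]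

lemma hamming_eq_hammingDist (r s : ι → Bool) : hamming r s = hammingDist r s := rfl

end HammingDist

variable {n m : ℕ}

lemma sum_issue {M : Type*} [AddCommMonoid M] (f : Issue n m → M) :
    ∑ i, f i = (∑ i, f (.x i) + ∑ i, f (.x' i)) + ∑ i, f (.z i)
      + (∑ j, f (.y j) + ∑ j, f (.y' j)) + ∑ j, f (.t j)
      + ∑ k, ∑ l, f (.u k l) + f .a + ∑ j, f (.b j) := by
  rw [← (Issue.proxyTypeEquiv n m).sum_comp f]
  simp only [Fintype.sum_sum_type, Fintype.sum_sigma, Fintype.sum_unique, add_assoc]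
  rfl

/-- The pairs `x`, `x'` and `y`, `y'` are bracketed so that `hammingDist_add_hammingDist_not`
applies to them, and `a` is a family indexed by `Unit` so that `hammingDist_const` does. -/
lemma hamming_eq_sum_hammingDist (r s : Issue n m → Bool) :
    hamming r s =
      (hammingDist (fun i => r (.x i)) (fun i => s (.x i))
        + hammingDist (fun i => r (.x' i)) (fun i => s (.x' i)))
      + hammingDist (fun i => r (.z i)) (fun i => s (.z i))
      + (hammingDist (fun j => r (.y j)) (fun j => s (.y j))
        + hammingDist (fun j => r (.y' j)) (fun j => s (.y' j)))
      + hammingDist (fun j => r (.t j)) (fun j => s (.t j))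
      + ∑ k, hammingDist (fun l => r (.u k l)) (fun l => s (.u k l))
      + hammingDist (fun _ : Unit => r .a) (fun _ => s .a)
      + hammingDist (fun j => r (.b j)) (fun j => s (.b j)) := by
  simp only [hamming_eq_hammingDist, hammingDist, Finset.card_filter, sum_issue, Fintype.sum_unique]

lemma hamming_Jp_of_u_eq_false {r : Issue n m → Bool} (hu : ∀ k l, r (.u k l) = false)
    (k : Fin 3) :
    hamming r (Jp k) = hamming r (fun _ => false) + (10 * n + 10 * m + 10) := by
  have hsum : ∑ k' : Fin 3, hammingDist (fun _ : Fin (10 * n + 10 * m + 10) => false)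
      (fun _ => k' == k) = 10 * n + 10 * m + 10 := by
    simp [hammingDist_const]
  rw [hamming_eq_sum_hammingDist, hamming_eq_sum_hammingDist]
  simp only [Jp, hu, hammingDist_self, Finset.sum_const_zero, hsum]
  ring

lemma hamming_Jalpha_const_false (α : Fin n → Bool) :
    hamming (Jalpha α : Issue n m → Bool) (fun _ => false) = n + 3 * m + 4 := by
  rw [hamming_eq_sum_hammingDist]
  simp only [Jalpha, hammingDist_add_hammingDist_not, hammingDist_const, hammingDist_self,
    Bool.true_eq_false, ↓reduceIte, Finset.sum_const_zero, Fintype.card_fin]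
  ring

lemma hamming_Jab_const_false (α : Fin n → Bool) (β : Fin m → Bool) :
    hamming (Jab α β : Issue n m → Bool) (fun _ => false) = n + m + 1 := by
  rw [hamming_eq_sum_hammingDist]
  simp [Jab, hammingDist_add_hammingDist_not, hammingDist_const]

lemma hamming_Jab_Jalpha (α : Fin n → Bool) (β : Fin m → Bool) :
    hamming (Jab α β : Issue n m → Bool) (Jalpha α) = 4 * m + 5 := by
  rw [hamming_eq_sum_hammingDist]
  simp only [Jab, Jalpha, hammingDist_add_hammingDist_not, hammingDist_const, hammingDist_self,
    Bool.true_eq_false, Bool.false_eq_true, ↓reduceIte, Finset.sum_const_zero, Fintype.card_fin,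
    Fintype.card_unique]
  ring

lemma dist3_Jalpha (α : Fin n → Bool) :
    dist3 (Jalpha α : Issue n m → Bool) (Jalpha α) (Jp 1) (Jp 2)
      = 2 * n + 6 * m + 8 + 2 * (10 * n + 10 * m + 10) := by
  have hu : ∀ k l, (Jalpha α : Issue n m → Bool) (.u k l) = false := fun _ _ => rfl
  rw [dist3, hamming_eq_hammingDist, hammingDist_self, hamming_Jp_of_u_eq_false hu,
    hamming_Jp_of_u_eq_false hu, hamming_Jalpha_const_false]
  ring

lemma dist3_Jab (α : Fin n → Bool) (β : Fin m → Bool) :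
    dist3 (Jab α β : Issue n m → Bool) (Jalpha α) (Jp 1) (Jp 2)
      = 2 * n + 6 * m + 7 + 2 * (10 * n + 10 * m + 10) := by
  have hu : ∀ k l, (Jab α β : Issue n m → Bool) (.u k l) = false := fun _ _ => rfl
  rw [dist3, hamming_Jab_Jalpha, hamming_Jp_of_u_eq_false hu,
    hamming_Jp_of_u_eq_false hu, hamming_Jab_const_false]
  ring

variable {psi : (Fin n → Bool) → (Fin m → Bool) → Bool}

lemma gamma0_of_bigA_of_bigB {r : Issue n m → Bool} (hn : 0 < n) (hm : 0 < m)
    (hA : bigA r) (hB : bigB r) (ha : r .a = true) (hz : ∀ i, r (.z i) = false)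
    (ht : ∀ j, r (.t j) = false) (hb : ∀ j, r (.b j) = false)
    (hpsi : psi (fun i => r (.x i)) (fun j => r (.y j)) = false) :
    gamma0 psi r := by
  have hZ : ¬ bigZ r := fun h => by simpa [hz] using h ⟨0, hn⟩
  have hT : ¬ bigT r := fun h => by simpa [ht] using h ⟨0, hm⟩
  have hC : ¬ bigC r := fun h => by simpa [hb] using h ⟨0, by omega⟩
  exact ⟨.inl ha, fun _ => hb, fun h => absurd h hC, .inl hA, fun _ => hz, .inl ⟨hB, hT⟩,
    fun _ => ht, fun h => absurd h hZ, fun h => absurd h hT, fun h => absurd h hZ,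
    fun _ => ⟨hpsi, ha⟩, fun h => absurd h.2 hT⟩

lemma rational_Jab (hn : 0 < n) (hm : 0 < m) {α : Fin n → Bool} {β : Fin m → Bool}
    (hfalse : psi α β = false) : rational psi (Jab α β) := by
  have hA : bigA (Jab α β) := fun i => by simp [Jab]
  have hB : bigB (Jab α β) := fun j => by simp [Jab]
  exact .inl <| gamma0_of_bigA_of_bigB hn hm hA hB rfl (fun _ => rfl) (fun _ => rfl)
    (fun _ => rfl) hfalse

lemma not_kemenyMem_of_dist3_lt {p₁ p₂ p₃ r r' : Issue n m → Bool} (hr' : rational psi r')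
    (hlt : dist3 r' p₁ p₂ p₃ < dist3 r p₁ p₂ p₃) : ¬ kemenyMem psi p₁ p₂ p₃ r :=
  fun hr => hlt.not_ge (hr.2 r' hr')

end Brib

open Brib in
/-- for all α, β, if ψ[α∪β] is false then J*_{α,β} is rational and
Dist(J*_{α,β}, (J*_α, J₂, J₃)) = 2n + 6m + 7 + 2u < 2n + 6m + 8 + 2u
= Dist(J*_α, (J*_α, J₂, J₃)); consequently J*_α ∉ Kemeny((J*_α, J₂, J₃)). -/
theorem brib_counterexample_ballot (n m : ℕ) (hn : 0 < n) (hm : 0 < m)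
    (psi : (Fin n → Bool) → (Fin m → Bool) → Bool)
    (α : Fin n → Bool) (β : Fin m → Bool)
    (hfalse : psi α β = false) :
    rational psi (Jab α β : Issue n m → Bool) ∧
    dist3 (Jab α β : Issue n m → Bool) (Jalpha α) (Jp 1) (Jp 2)
      = 2 * n + 6 * m + 7 + 2 * (10 * n + 10 * m + 10) ∧
    2 * n + 6 * m + 7 + 2 * (10 * n + 10 * m + 10)
      < 2 * n + 6 * m + 8 + 2 * (10 * n + 10 * m + 10) ∧
    dist3 (Jalpha α : Issue n m → Bool) (Jalpha α) (Jp 1) (Jp 2)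
      = 2 * n + 6 * m + 8 + 2 * (10 * n + 10 * m + 10) ∧
    ¬ kemenyMem psi (Jalpha α) (Jp 1) (Jp 2) (Jalpha α : Issue n m → Bool) := by
  have hrat : rational psi (Jab α β) := rational_Jab hn hm hfalse
  have hlt : 2 * n + 6 * m + 7 + 2 * (10 * n + 10 * m + 10)
      < 2 * n + 6 * m + 8 + 2 * (10 * n + 10 * m + 10) := by omega
  refine ⟨hrat, dist3_Jab α β, hlt, dist3_Jalpha α, not_kemenyMem_of_dist3_lt hrat ?_⟩
  rwa [dist3_Jab, dist3_Jalpha]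
end
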